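/- Let R be a commutative semiring. An R-module M is flat if and only if the following equational criterion holds: whenever r, s ∈ R^m and x ∈ M^m satisfy Σᵢ rᵢxᵢ = Σᵢ sᵢxᵢ, there exist n ≥ 0, a matrix a ∈ R^{m×n} and y ∈ M^n such that xᵢ = Σⱼ aᵢⱼ yⱼ for all i and Σᵢ rᵢaᵢⱼ = Σᵢ sᵢaᵢⱼ for all j. -/

import Mathlib

/-!
From flatness to the criterion: apply flatness to the two functionals `r, s : R ^ m → R`. The
hypothesis says that `∑ xᵢ ⊗ eᵢ` lies in the equalizer of `M ⊗ r` and `M ⊗ s`, so it comes from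
some `∑ yⱼ ⊗ cⱼ` with `cⱼ` in the equalizer of `r` and `s`; the coordinates of the `cⱼ` form the
matrix `a`.

Conversely, the criterion makes the category of finite free modules over `M` filtered
(`HasFreeRefinements`), so that `M ⊗ N` behaves like the filtered colimit of the `F ⊗ N` over all
maps `y : F → M` with `F` finite free. Every tensor comes from some `F ⊗ N`
(`exists_rTensor_eq`), and two elements of `F ⊗ N` with the same image in `M ⊗ N` become equal in
`F' ⊗ N` for some factorization `F → F' → M` of `y` (`exists_refinement_of_rTensor_eq`). The latter
is proved by presenting `M ⊗ N` as formal sums of pairs `(m, n)` modulo bilinearity, and showing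
that having a common lift to some `F ⊗ N` is a congruence containing the bilinearity relations
(`eqv_le_repCon`). Since free modules are flat (`isSemiflat_of_free`), both halves of
flatness can be checked at a finite free stage and transported to `M`.
-/

/-!
Equational criterion for flatness over a commutative semiring: a module `M` is flat
iff every relation `∑ rᵢ xᵢ = ∑ sᵢ xᵢ` in `M` is rectifiable.
-/

universe u

open TensorProduct

/-- `M` is flat over the commutative semiring `R`: tensoring with `M` preserves
equalizers (hence all finite limits).  Concretely, for every pair of linear maps
`f g : N → P`, the canonical map `M ⊗ eq(f,g) → eq(M ⊗ f, M ⊗ g)` is an isomorphism,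
i.e. `M ⊗ eq(f,g) → M ⊗ N` is injective with image the equalizer of `M ⊗ f` and
`M ⊗ g`. -/
def IsSemiflat (R : Type u) [CommSemiring R] (M : Type u) [AddCommMonoid M] [Module R M] : Prop :=
  ∀ (N P : Type u) [AddCommMonoid N] [AddCommMonoid P] [Module R N] [Module R P]
    (f g : N →ₗ[R] P),
    Function.Injective (LinearMap.lTensor M (LinearMap.eqLocus f g).subtype) ∧
    LinearMap.range (LinearMap.lTensor M (LinearMap.eqLocus f g).subtype) =
      LinearMap.eqLocus (LinearMap.lTensor M f) (LinearMap.lTensor M g)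

section Helpers

variable {R : Type u} [CommSemiring R]

/-! ### Flatness of free modules -/

/-- Free modules are flat: over a basis, `F ⊗ N` is a direct sum of copies of `N`, and
equalizers of direct sums are computed coordinatewise. -/
theorem isSemiflat_of_free (F : Type u) [AddCommMonoid F] [Module R F] [Module.Free R F] :
    IsSemiflat R F := by
  classical
  intro N P _ _ _ _ f g
  let b := Module.Free.chooseBasis R F
  have key : ∀ {A B : Type u} [AddCommMonoid A] [AddCommMonoid B] [Module R A] [Module R B]
      (h : A →ₗ[R] B) (t : F ⊗[R] A) i,
      equivFinsuppOfBasisLeft b (h.lTensor F t) i = h (equivFinsuppOfBasisLeft b t i) := by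
    intro A B _ _ _ _ h t i
    induction t with
    | zero => simp
    | tmul x a => simp
    | add x y hx hy => simp [hx, hy]
  refine ⟨fun t₁ t₂ h => ?_, le_antisymm ?_ fun t ht => ?_⟩
  · apply (equivFinsuppOfBasisLeft b).injective
    ext i
    have := congrArg (fun t => equivFinsuppOfBasisLeft b t i) h
    simp only [key] at this
    exact this
  · rintro _ ⟨t, rfl⟩
    rw [LinearMap.mem_eqLocus, ← LinearMap.comp_apply, ← LinearMap.comp_apply,
      ← LinearMap.lTensor_comp, ← LinearMap.lTensor_comp]
    congr 2
    ext k
    exact k.2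
  · have hc : ∀ i, f (equivFinsuppOfBasisLeft b t i) = g (equivFinsuppOfBasisLeft b t i) := by
      intro i
      rw [← key, ← key, ht]
    obtain ⟨w, rfl⟩ := (equivFinsuppOfBasisLeft b).symm.surjective t
    simp only [LinearEquiv.apply_symm_apply] at hc
    rw [equivFinsuppOfBasisLeft_symm_apply]
    refine Submodule.sum_mem _ fun i _ => ⟨b i ⊗ₜ ⟨w i, hc i⟩, by simp⟩

/-! ### Refinements of finite free modules over `M` -/

/-- The coordinate-free form of the equational criterion: any two elements of a finite free
module that are identified by a map to `M` are already identified by the first map of some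
factorization `F → F' → M` through another finite free module. -/
def HasFreeRefinements (R : Type u) [CommSemiring R] (M : Type u) [AddCommMonoid M]
    [Module R M] : Prop :=
  ∀ (F : Type u) [AddCommMonoid F] [Module R F] [Module.Free R F] [Module.Finite R F]
    (y : F →ₗ[R] M) (a b : F), y a = y b →
    ∃ (F' : Type u) (_ : AddCommMonoid F') (_ : Module R F') (_ : Module.Free R F')
      (_ : Module.Finite R F') (d : F →ₗ[R] F') (y' : F' →ₗ[R] M), y' ∘ₗ d = y ∧ d a = d b

variable {M : Type u} [AddCommMonoid M] [Module R M]

theorem hasFreeRefinements_of_criterion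
    (H : ∀ (m : ℕ) (r s : Fin m → R) (x : Fin m → M),
        (∑ i, r i • x i) = (∑ i, s i • x i) →
        ∃ (n : ℕ) (a : Fin m → Fin n → R) (y : Fin n → M),
          (∀ i, x i = ∑ j, a i j • y j) ∧
          (∀ j, (∑ i, r i * a i j) = ∑ i, s i * a i j)) :
    HasFreeRefinements R M := by
  classical
  intro F _ _ _ _ y r s h
  let b₀ := Module.Free.chooseBasis R F
  let b := b₀.reindex (Fintype.equivFin _)
  have hy : ∀ c : F, y c = ∑ i, b.repr c i • y (b i) := by
    intro c
    conv_lhs => rw [← b.sum_repr c]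
    rw [map_sum]
    simp_rw [map_smul]
  obtain ⟨n, a, z, hz, ha⟩ := H _ (b.repr r) (b.repr s) (fun i => y (b i)) (by
    rw [← hy, ← hy, h])
  refine ⟨Fin n → R, inferInstance, inferInstance, inferInstance, inferInstance,
    b.constr R a, Fintype.linearCombination R z, b.ext fun i => ?_, ?_⟩
  · simp [Fintype.linearCombination_apply, hz]
  · ext j
    simpa [Module.Basis.constr_apply_fintype] using ha j

variable {N : Type u} [AddCommMonoid N] [Module R N]

/-! ### Lifts of formal sums to finite free modules -/

/-- `TensorLift y u w` says that `w ∈ F ⊗ N` lifts the formal sum `u = ∑ (mᵢ, nᵢ)` along `y : F → M`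
term by term: `w = ∑ aᵢ ⊗ nᵢ` for some choice of `aᵢ ∈ F` with `y aᵢ = mᵢ`. -/
def TensorLift {F : Type u} [AddCommMonoid F] [Module R F] (y : F →ₗ[R] M) :
    List (M × N) → F ⊗[R] N → Prop
  | [], w => w = 0
  | p :: u, w => ∃ a w', y a = p.1 ∧ TensorLift y u w' ∧ w = a ⊗ₜ p.2 + w'

section
variable {F F' : Type u} [AddCommMonoid F] [Module R F] [AddCommMonoid F'] [Module R F']

theorem TensorLift.single {y : F →ₗ[R] M} (a : F) (n : N) : TensorLift y [(y a, n)] (a ⊗ₜ n) :=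
  ⟨a, 0, rfl, rfl, by simp⟩

theorem TensorLift.append {y : F →ₗ[R] M} {u v : List (M × N)} {w w' : F ⊗[R] N}
    (h : TensorLift y u w) (h' : TensorLift y v w') : TensorLift y (u ++ v) (w + w') := by
  induction u generalizing w with
  | nil => cases h; simpa using h'
  | cons p u ih =>
    obtain ⟨a, w₁, ha, h₁, rfl⟩ := h
    exact ⟨a, w₁ + w', ha, ih h₁, by rw [add_assoc]⟩

theorem TensorLift.map {y : F →ₗ[R] M} {y' : F' →ₗ[R] M} {d : F →ₗ[R] F'} (hd : y' ∘ₗ d = y)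
    {u : List (M × N)} {w : F ⊗[R] N} (h : TensorLift y u w) : TensorLift y' u (d.rTensor N w) := by
  induction u generalizing w with
  | nil => cases h; exact map_zero _
  | cons p u ih =>
    obtain ⟨a, w₁, ha, h₁, rfl⟩ := h
    exact ⟨d a, _, by rw [← ha, ← hd]; rfl, ih h₁, by simp⟩

theorem TensorLift.mk_eq {y : F →ₗ[R] M} {u : List (M × N)} {w : F ⊗[R] N} (h : TensorLift y u w) :
    (addConGen (TensorProduct.Eqv R M N)).mk' (FreeAddMonoid.ofList u) = y.rTensor N w := by
  induction u generalizing w with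
  | nil => cases h; rw [map_zero]; rfl
  | cons p u ih =>
    obtain ⟨a, w₁, ha, h₁, rfl⟩ := h
    rw [map_add, ← ih h₁, LinearMap.rTensor_tmul, ha]
    rfl

theorem exists_rep_of_tensor (y : F →ₗ[R] M) (w : F ⊗[R] N) : ∃ u, TensorLift y u w := by
  induction w with
  | zero => exact ⟨[], rfl⟩
  | tmul a n => exact ⟨_, TensorLift.single a n⟩
  | add w₁ w₂ h₁ h₂ =>
    obtain ⟨u₁, h₁⟩ := h₁
    obtain ⟨u₂, h₂⟩ := h₂
    exact ⟨_, h₁.append h₂⟩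

end

variable (R) in
theorem exists_rep (u : List (M × N)) :
    ∃ (F : Type u) (_ : AddCommMonoid F) (_ : Module R F) (_ : Module.Free R F)
      (_ : Module.Finite R F) (y : F →ₗ[R] M) (w : F ⊗[R] N), TensorLift y u w := by
  induction u with
  | nil =>
    exact ⟨PUnit, inferInstance, inferInstance, inferInstance, inferInstance, 0, 0, rfl⟩
  | cons p u ih =>
    obtain ⟨F, _, _, _, _, y, w, h⟩ := ih
    refine ⟨R × F, inferInstance, inferInstance, inferInstance, inferInstance,
      (LinearMap.toSpanSingleton R M p.1).coprod y, _, (1, 0), _, by simp,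
      h.map (d := LinearMap.inr R R F) (by simp), rfl⟩

/-- Two lifts of the same formal sum become equal after refining the finite free module, one
term of the sum at a time. -/
theorem TensorLift.unify (H : HasFreeRefinements R M) {u : List (M × N)}
    {F : Type u} [AddCommMonoid F] [Module R F] [Module.Free R F] [Module.Finite R F]
    {y : F →ₗ[R] M} {w₁ w₂ : F ⊗[R] N} (h₁ : TensorLift y u w₁) (h₂ : TensorLift y u w₂) :
    ∃ (F' : Type u) (_ : AddCommMonoid F') (_ : Module R F') (_ : Module.Free R F')
      (_ : Module.Finite R F') (d : F →ₗ[R] F') (y' : F' →ₗ[R] M), y' ∘ₗ d = y ∧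
      d.rTensor N w₁ = d.rTensor N w₂ := by
  induction u generalizing F with
  | nil =>
    cases h₁; cases h₂
    exact ⟨F, inferInstance, inferInstance, inferInstance, inferInstance, .id, y, rfl, rfl⟩
  | cons p u ih =>
    obtain ⟨a₁, v₁, ha₁, h₁, rfl⟩ := h₁
    obtain ⟨a₂, v₂, ha₂, h₂, rfl⟩ := h₂
    obtain ⟨G, _, _, _, _, d, z, hd, hda⟩ := H F y a₁ a₂ (ha₁.trans ha₂.symm)
    obtain ⟨G', _, _, _, _, d', z', hd', hdv⟩ := ih (h₁.map hd) (h₂.map hd)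
    refine ⟨G', inferInstance, inferInstance, inferInstance, inferInstance, d' ∘ₗ d, z',
      by rw [← LinearMap.comp_assoc, hd', hd], ?_⟩
    simp only [LinearMap.rTensor_comp, LinearMap.comp_apply, map_add, hdv,
      LinearMap.rTensor_tmul, hda]

/-! ### Equality in `M ⊗ N` at a finite free stage -/

variable (R) in
/-- Two formal sums are related when they have a common lift over some finite free module. -/
def RepRel (u v : List (M × N)) : Prop :=
  ∃ (F : Type u) (_ : AddCommMonoid F) (_ : Module R F) (_ : Module.Free R F)
    (_ : Module.Finite R F) (y : F →ₗ[R] M) (w : F ⊗[R] N), TensorLift y u w ∧ TensorLift y v w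

theorem RepRel.trans (H : HasFreeRefinements R M) {u v x : List (M × N)}
    (h : RepRel R u v) (h' : RepRel R v x) : RepRel R u x := by
  obtain ⟨F, _, _, _, _, y, w, hu, hv⟩ := h
  obtain ⟨F', _, _, _, _, y', w', hv', hx⟩ := h'
  have e : y.coprod y' ∘ₗ LinearMap.inl R F F' = y := by simp
  have e' : y.coprod y' ∘ₗ LinearMap.inr R F F' = y' := by simp
  obtain ⟨G, _, _, _, _, d, z, hd, hw⟩ := TensorLift.unify H (hv.map e) (hv'.map e')
  exact ⟨G, inferInstance, inferInstance, inferInstance, inferInstance, z, _,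
    (hu.map e).map hd, hw ▸ (hx.map e').map hd⟩

theorem RepRel.append {u v u' v' : List (M × N)}
    (h : RepRel R u v) (h' : RepRel R u' v') : RepRel R (u ++ u') (v ++ v') := by
  obtain ⟨F, _, _, _, _, y, w, hu, hv⟩ := h
  obtain ⟨F', _, _, _, _, y', w', hu', hv'⟩ := h'
  have e : y.coprod y' ∘ₗ LinearMap.inl R F F' = y := by simp
  have e' : y.coprod y' ∘ₗ LinearMap.inr R F F' = y' := by simp
  exact ⟨F × F', inferInstance, inferInstance, inferInstance, inferInstance, y.coprod y', _,
    (hu.map e).append (hu'.map e'), (hv.map e).append (hv'.map e')⟩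

variable (N) in
/-- `RepRel` as an additive congruence on formal sums; transitivity is where the equational
criterion enters. -/
def repCon (H : HasFreeRefinements R M) : AddCon (FreeAddMonoid (M × N)) where
  r u v := RepRel R u.toList v.toList
  iseqv :=
    { refl := fun u => by
        obtain ⟨F, _, _, _, _, y, w, h⟩ := exists_rep R u.toList
        exact ⟨F, inferInstance, inferInstance, inferInstance, inferInstance, y, w, h, h⟩
      symm := fun ⟨F, i₁, i₂, i₃, i₄, y, w, h, h'⟩ => ⟨F, i₁, i₂, i₃, i₄, y, w, h', h⟩
      trans := RepRel.trans H }
  add' h h' := RepRel.append h h'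

/-- The bilinearity relations defining `M ⊗ N` hold for `repCon`. -/
theorem eqv_le_repCon (H : HasFreeRefinements R M) :
    addConGen (TensorProduct.Eqv R M N) ≤ repCon N H := by
  refine AddCon.addConGen_le.2 fun u v h => ?_
  change RepRel R u.toList v.toList
  let s (m : M) : R →ₗ[R] M := LinearMap.toSpanSingleton R M m
  have hs (m : M) (n : N) : TensorLift (s m) [(m, n)] ((1 : R) ⊗ₜ n) := by
    simpa [s] using TensorLift.single (y := s m) 1 n
  cases h with
  | of_zero_left n =>
    refine ⟨R, inferInstance, inferInstance, inferInstance, inferInstance, s 0, 0, ?_, rfl⟩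
    exact ⟨0, 0, by simp, rfl, by simp⟩
  | of_zero_right m =>
    refine ⟨R, inferInstance, inferInstance, inferInstance, inferInstance, s m, 0, ?_, rfl⟩
    exact ⟨1, 0, by simp [s], rfl, by simp⟩
  | of_add_left m₁ m₂ n =>
    refine ⟨R × R, inferInstance, inferInstance, inferInstance, inferInstance,
      (s m₁).coprod (s m₂), ((1, 0) : R × R) ⊗ₜ n + ((0, 1) : R × R) ⊗ₜ n, ?_, ?_⟩
    · exact ⟨(1, 0), (0, 1) ⊗ₜ n, by simp [s], ⟨(0, 1), 0, by simp [s], rfl, by simp⟩, rfl⟩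
    · exact ⟨(1, 1), 0, by simp [s], rfl, by simp [← TensorProduct.add_tmul]⟩
  | of_add_right m n₁ n₂ =>
    refine ⟨R, inferInstance, inferInstance, inferInstance, inferInstance, s m,
      (1 : R) ⊗ₜ n₁ + (1 : R) ⊗ₜ n₂, (hs m n₁).append (hs m n₂), ?_⟩
    rw [← TensorProduct.tmul_add]
    exact hs m _
  | of_smul r m n =>
    refine ⟨R, inferInstance, inferInstance, inferInstance, inferInstance, s m, r ⊗ₜ n, ?_, ?_⟩
    · exact ⟨r, 0, by simp [s], rfl, by simp⟩
    · exact ⟨1, 0, by simp [s], rfl, by simp [TensorProduct.smul_tmul']⟩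
  | add_comm u v =>
    obtain ⟨F, _, _, _, _, y, w, h⟩ := exists_rep R u.toList
    obtain ⟨F', _, _, _, _, y', w', h'⟩ := exists_rep R v.toList
    have e := h.map (y' := y.coprod y') (d := LinearMap.inl R F F') (by simp)
    have e' := h'.map (y' := y.coprod y') (d := LinearMap.inr R F F') (by simp)
    refine ⟨F × F', inferInstance, inferInstance, inferInstance, inferInstance, y.coprod y', _,
      e.append e', ?_⟩
    rw [add_comm]
    exact e'.append e

/-- Equality in `M ⊗ N` is detected at a finite free stage, as in a filtered colimit of
the modules `F ⊗ N`. -/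
theorem exists_refinement_of_rTensor_eq (H : HasFreeRefinements R M)
    {F : Type u} [AddCommMonoid F] [Module R F] [Module.Free R F] [Module.Finite R F]
    {y : F →ₗ[R] M} {w₁ w₂ : F ⊗[R] N} (h : y.rTensor N w₁ = y.rTensor N w₂) :
    ∃ (F' : Type u) (_ : AddCommMonoid F') (_ : Module R F') (_ : Module.Free R F')
      (_ : Module.Finite R F') (d : F →ₗ[R] F') (y' : F' →ₗ[R] M), y' ∘ₗ d = y ∧
      d.rTensor N w₁ = d.rTensor N w₂ := by
  obtain ⟨u₁, h₁⟩ := exists_rep_of_tensor y w₁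
  obtain ⟨u₂, h₂⟩ := exists_rep_of_tensor y w₂
  rw [← h₁.mk_eq, ← h₂.mk_eq] at h
  obtain ⟨F', _, _, _, _, y', v, hv₁, hv₂⟩ := eqv_le_repCon H ((AddCon.eq _).1 h)
  have e : y.coprod y' ∘ₗ LinearMap.inl R F F' = y := by simp
  have e' : y.coprod y' ∘ₗ LinearMap.inr R F F' = y' := by simp
  -- Identify the images of `w₁` and `v`, then those of `w₂` and `v`.
  obtain ⟨G, _, _, _, _, d, z, hd, hw⟩ := TensorLift.unify H (h₁.map e) (hv₁.map e')
  obtain ⟨G', _, _, _, _, d', z', hd', hw'⟩ :=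
    TensorLift.unify H ((h₂.map e).map hd) ((hv₂.map e').map hd)
  refine ⟨G', inferInstance, inferInstance, inferInstance, inferInstance,
    d' ∘ₗ d ∘ₗ LinearMap.inl R F F', z', ?_, ?_⟩
  · rw [← LinearMap.comp_assoc, hd', ← LinearMap.comp_assoc, hd, e]
  · simp only [LinearMap.rTensor_comp, LinearMap.comp_apply]
    rw [hw, hw']

variable (R) in
theorem exists_rTensor_eq (t : M ⊗[R] N) :
    ∃ (F : Type u) (_ : AddCommMonoid F) (_ : Module R F) (_ : Module.Free R F)
      (_ : Module.Finite R F) (y : F →ₗ[R] M) (w : F ⊗[R] N), y.rTensor N w = t := by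
  obtain ⟨u, hu⟩ := exists_rep_of_tensor (LinearMap.id : M →ₗ[R] M) t
  obtain ⟨F, _, _, _, _, y, w, h⟩ := exists_rep R u
  refine ⟨F, inferInstance, inferInstance, inferInstance, inferInstance, y, w, ?_⟩
  rw [← h.mk_eq, hu.mk_eq, LinearMap.rTensor_id, LinearMap.id_apply]

/-! ### The two directions of the criterion -/

theorem lTensor_rTensor_comm {A B F : Type u} [AddCommMonoid A] [Module R A] [AddCommMonoid B]
    [Module R B] [AddCommMonoid F] [Module R F] (h : A →ₗ[R] B) (y : F →ₗ[R] M)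
    (w : F ⊗[R] A) : h.lTensor M (y.rTensor A w) = y.rTensor B (h.lTensor F w) := by
  rw [← LinearMap.comp_apply, ← LinearMap.comp_apply, LinearMap.lTensor_comp_rTensor,
    LinearMap.rTensor_comp_lTensor]

theorem HasFreeRefinements.isSemiflat (H : HasFreeRefinements R M) : IsSemiflat R M := by
  intro N P _ _ _ _ f g
  refine ⟨fun t₁ t₂ h => ?_, le_antisymm ?_ fun t ht => ?_⟩
  · obtain ⟨F₁, _, _, _, _, y₁, w₁, rfl⟩ := exists_rTensor_eq R t₁
    obtain ⟨F₂, _, _, _, _, y₂, w₂, rfl⟩ := exists_rTensor_eq R t₂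
    have e₁ : y₁.coprod y₂ ∘ₗ LinearMap.inl R F₁ F₂ = y₁ := by simp
    have e₂ : y₁.coprod y₂ ∘ₗ LinearMap.inr R F₁ F₂ = y₂ := by simp
    -- Both tensors come from the common stage `F₁ × F₂`.
    generalize y₁.coprod y₂ = y at e₁ e₂
    subst e₁ e₂
    simp only [LinearMap.rTensor_comp, LinearMap.comp_apply] at h ⊢
    generalize (LinearMap.inl R F₁ F₂).rTensor _ w₁ = v₁ at h ⊢
    generalize (LinearMap.inr R F₁ F₂).rTensor _ w₂ = v₂ at h ⊢
    rw [lTensor_rTensor_comm, lTensor_rTensor_comm] at h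
    obtain ⟨G, _, _, _, _, d, z, rfl, hd⟩ := exists_refinement_of_rTensor_eq H h
    rw [← lTensor_rTensor_comm, ← lTensor_rTensor_comm] at hd
    simp only [LinearMap.rTensor_comp, LinearMap.comp_apply]
    rw [(isSemiflat_of_free G N P f g).1 hd]
  · rintro _ ⟨t, rfl⟩
    rw [LinearMap.mem_eqLocus, ← LinearMap.comp_apply, ← LinearMap.comp_apply,
      ← LinearMap.lTensor_comp, ← LinearMap.lTensor_comp]
    congr 2
    ext k
    exact k.2
  · obtain ⟨F, _, _, _, _, y, w, rfl⟩ := exists_rTensor_eq R t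
    rw [LinearMap.mem_eqLocus, lTensor_rTensor_comm, lTensor_rTensor_comm] at ht
    obtain ⟨G, _, _, _, _, d, z, rfl, hd⟩ := exists_refinement_of_rTensor_eq H ht
    rw [← lTensor_rTensor_comm, ← lTensor_rTensor_comm, ← LinearMap.mem_eqLocus,
      ← (isSemiflat_of_free G N P f g).2] at hd
    obtain ⟨k, hk⟩ := hd
    refine ⟨z.rTensor _ k, ?_⟩
    rw [lTensor_rTensor_comm, hk, LinearMap.rTensor_comp, LinearMap.comp_apply]

/-- An element of `M ⊗ N` is a finite sum of pure tensors, indexed by some `Fin n`. -/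
theorem exists_fin_sum_tmul (t : M ⊗[R] N) :
    ∃ (n : ℕ) (y : Fin n → M) (k : Fin n → N), t = ∑ j, y j ⊗ₜ[R] k j := by
  induction t with
  | zero => exact ⟨0, Fin.elim0, Fin.elim0, by simp⟩
  | tmul m n => exact ⟨1, fun _ => m, fun _ => n, by simp⟩
  | add t₁ t₂ h₁ h₂ =>
    obtain ⟨n₁, y₁, k₁, rfl⟩ := h₁
    obtain ⟨n₂, y₂, k₂, rfl⟩ := h₂
    exact ⟨n₁ + n₂, Fin.append y₁ y₂, Fin.append k₁ k₂, by simp [Fin.sum_univ_add]⟩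

end Helpers

/-- **Equational criterion for flatness over semirings.** -/
theorem isSemiflat_iff_equational_criterion (R : Type u) [CommSemiring R]
    (M : Type u) [AddCommMonoid M] [Module R M] :
    IsSemiflat R M ↔
      ∀ (m : ℕ) (r s : Fin m → R) (x : Fin m → M),
        (∑ i, r i • x i) = (∑ i, s i • x i) →
        ∃ (n : ℕ) (a : Fin m → Fin n → R) (y : Fin n → M),
          (∀ i, x i = ∑ j, a i j • y j) ∧
          (∀ j, (∑ i, r i * a i j) = ∑ i, s i * a i j) := by
  classical
  refine ⟨fun H m r s x h => ?_, fun H => (hasFreeRefinements_of_criterion H).isSemiflat⟩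
  -- `f` and `g` are the functionals on `R ^ m` with coefficient vectors `r` and `s`.
  let f : (Fin m → R) →ₗ[R] R := Fintype.linearCombination R r
  let g : (Fin m → R) →ₗ[R] R := Fintype.linearCombination R s
  let t : M ⊗[R] (Fin m → R) := ∑ i, x i ⊗ₜ Pi.single i 1
  have ht : t ∈ LinearMap.eqLocus (f.lTensor M) (g.lTensor M) := by
    apply (TensorProduct.rid R M).injective
    simpa [t, f, g] using h
  rw [← (H _ _ f g).2] at ht
  obtain ⟨k, hk⟩ := ht
  obtain ⟨n, y, c, rfl⟩ := exists_fin_sum_tmul k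
  refine ⟨n, fun i j => (c j).1 i, y, fun i => ?_, fun j => ?_⟩
  · have := congrArg
      (fun t => TensorProduct.rid R M ((LinearMap.proj (R := R) i).lTensor M t)) hk
    simpa [t, Pi.single_apply] using this.symm
  · have := LinearMap.mem_eqLocus.1 (c j).2
    simpa only [f, g, Fintype.linearCombination_apply, smul_eq_mul, mul_comm] using this
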